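/- Let μ and ν be Borel probability measures on ℝ with quantile functions Q_μ, Q_ν, and define the extended-real FSD violations L(μ,ν) = ∫⁻_{q ∈ (0,1)} ENNReal.ofReal( max( Q_ν(q) − Q_μ(q), 0 ) ) dq and L(ν,μ) = ∫⁻_{q ∈ (0,1)} ENNReal.ofReal( max( Q_μ(q) − Q_ν(q), 0 ) ) dq. Then L(μ,ν) + L(ν,μ) equals the infimum over all couplings γ of μ and ν of ∫⁻_{(x,y) ∈ ℝ×ℝ} ENNReal.ofReal( |x − y| ) dγ, i.e., the 1-Wasserstein optimal transport cost between μ and ν. -/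

import Mathlib

/-!
Write `λ` for Lebesgue measure on `(0,1)`, and `F`, `G` for the CDFs of `μ`, `ν`. The Galois
connection `Q_μ p ≤ x ↔ p ≤ F x` shows that `Q_μ` pushes `λ` forward to `μ`, so the law of
`(Q_μ, Q_ν)` under `λ` is a coupling (the comonotone one). Since `|x - y| = (y - x)⁺ + (x - y)⁺`,
its cost is the sum of the two violations.

For optimality, the layer-cake identity `∫ (v - u)⁺ dη = ∫ η {u ≤ t < v} dt` reduces the claim to a
bound for each level `t`. Every coupling gives `{x ≤ t < y}` mass at least `F t - G t`, whereas
`{Q_μ ≤ t < Q_ν}` is contained in the interval `(G t, F t]` and so has mass at most `(F t - G t)⁺`.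
Hence each of the two one-sided parts of the cost is separately minimised by the comonotone coupling.
-/

open MeasureTheory Set

/-- The cumulative distribution function of a Borel measure on ℝ:
`F_μ(x) = μ((-∞, x])`. -/
noncomputable def cdfFn (μ : Measure ℝ) (x : ℝ) : ℝ := (μ (Iic x)).toReal

/-- The quantile function (generalized inverse of the CDF):
`Q_μ(p) = sInf { x | p ≤ F_μ(x) }`. -/
noncomputable def quantileFn (μ : Measure ℝ) (p : ℝ) : ℝ := sInf { x : ℝ | p ≤ cdfFn μ x }

theorem cdfFn_eq_cdf (μ : Measure ℝ) [IsProbabilityMeasure μ] (x : ℝ) :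
    cdfFn μ x = ProbabilityTheory.cdf μ x :=
  (ProbabilityTheory.cdf_eq_real μ x).symm

/-- The Galois connection between the quantile function and the CDF; right-continuity of the CDF
makes the infimum defining the quantile attained. -/
theorem quantileFn_le_iff (μ : Measure ℝ) [IsProbabilityMeasure μ] {p : ℝ}
    (hp : p ∈ Ioo (0 : ℝ) 1) (x : ℝ) : quantileFn μ p ≤ x ↔ p ≤ cdfFn μ x := by
  have hbdd : BddBelow {x : ℝ | p ≤ cdfFn μ x} := by
    obtain ⟨a, ha⟩ :=
      ((ProbabilityTheory.tendsto_cdf_atBot μ).eventually (gt_mem_nhds hp.1)).exists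
    refine ⟨a, fun y hy => ?_⟩
    by_contra! hya
    have hmono := ProbabilityTheory.monotone_cdf μ hya.le
    rw [mem_ofPred_eq, cdfFn_eq_cdf] at hy
    linarith
  have hne : {x : ℝ | p ≤ cdfFn μ x}.Nonempty := by
    obtain ⟨a, ha⟩ :=
      ((ProbabilityTheory.tendsto_cdf_atTop μ).eventually (lt_mem_nhds hp.2)).exists
    exact ⟨a, by rw [mem_ofPred_eq, cdfFn_eq_cdf]; exact ha.le⟩
  refine ⟨fun h => ?_, fun h => csInf_le hbdd h⟩
  have hright : ∀ y, x < y → p ≤ ProbabilityTheory.cdf μ y := by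
    intro y hy
    obtain ⟨z, hz, hzy⟩ := (csInf_lt_iff hbdd hne).1 (lt_of_le_of_lt h hy)
    rw [mem_ofPred_eq, cdfFn_eq_cdf] at hz
    exact hz.trans (ProbabilityTheory.monotone_cdf μ hzy.le)
  rw [cdfFn_eq_cdf]
  have hcont := ((ProbabilityTheory.cdf μ).right_continuous x).mono_left
    (nhdsWithin_mono x (Ioi_subset_Ici le_rfl))
  exact ge_of_tendsto hcont (by filter_upwards [self_mem_nhdsWithin] with y hy using hright y hy)

theorem aemeasurable_quantileFn (μ : Measure ℝ) [IsProbabilityMeasure μ] :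
    AEMeasurable (quantileFn μ) (volume.restrict (Ioo (0 : ℝ) 1)) := by
  refine aemeasurable_restrict_of_monotoneOn measurableSet_Ioo fun p hp q hq hpq => ?_
  exact (quantileFn_le_iff μ hp _).2 (hpq.trans ((quantileFn_le_iff μ hq _).1 le_rfl))

/-- Inverse transform sampling: the quantile function of a uniform variable has law `μ`. -/
theorem map_quantileFn (μ : Measure ℝ) [IsProbabilityMeasure μ] :
    (volume.restrict (Ioo (0 : ℝ) 1)).map (quantileFn μ) = μ := by
  have hfin : IsFiniteMeasure ((volume.restrict (Ioo (0 : ℝ) 1)).map (quantileFn μ)) :=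
    inferInstance
  refine Measure.ext_of_Iic _ _ fun x => ?_
  rw [Measure.map_apply_of_aemeasurable (aemeasurable_quantileFn μ) measurableSet_Iic,
    Measure.restrict_apply' measurableSet_Ioo]
  have hF0 : 0 ≤ cdfFn μ x := ENNReal.toReal_nonneg
  have hF1 : cdfFn μ x ≤ 1 := by
    rw [cdfFn_eq_cdf]; exact ProbabilityTheory.cdf_le_one μ x
  have hset : quantileFn μ ⁻¹' Iic x ∩ Ioo 0 1 = Iic (cdfFn μ x) ∩ Ioo 0 1 := by
    ext p
    exact and_congr_left fun hp => quantileFn_le_iff μ hp x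
  have hval : ENNReal.ofReal (cdfFn μ x) = μ (Iic x) :=
    ENNReal.ofReal_toReal (measure_ne_top _ _)
  rw [hset, ← hval]
  apply le_antisymm
  · calc volume (Iic (cdfFn μ x) ∩ Ioo 0 1) ≤ volume (Ioc 0 (cdfFn μ x)) :=
        measure_mono fun p hp => ⟨hp.2.1, hp.1⟩
      _ = ENNReal.ofReal (cdfFn μ x) := by rw [Real.volume_Ioc, sub_zero]
  · calc ENNReal.ofReal (cdfFn μ x) = volume (Ioo 0 (cdfFn μ x)) := by
          rw [Real.volume_Ioo, sub_zero]
      _ ≤ volume (Iic (cdfFn μ x) ∩ Ioo 0 1) := measure_mono fun p (hp : p ∈ Ioo 0 (cdfFn μ x)) =>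
          ⟨hp.2.le, hp.1, hp.2.trans_le hF1⟩

/-- Layer-cake formula: the positive part `(v - u)⁺` is the length of `[u, v)`. -/
theorem lintegral_ofReal_sub_eq {α : Type*} [MeasurableSpace α] (η : Measure α) [SFinite η]
    {u v : α → ℝ} (hu : AEMeasurable u η) (hv : AEMeasurable v η) :
    ∫⁻ a, ENNReal.ofReal (v a - u a) ∂η = ∫⁻ t : ℝ, η {a | u a ≤ t ∧ t < v a} := by
  let S : Set (α × ℝ) := {z | u z.1 ≤ z.2 ∧ z.2 < v z.1}
  have hS : NullMeasurableSet S (η.prod volume) :=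
    (nullMeasurableSet_le hu.comp_fst measurable_snd.aemeasurable).inter
      (nullMeasurableSet_lt measurable_snd.aemeasurable hv.comp_fst)
  have hleft : ∀ a, ∫⁻ t, S.indicator (1 : α × ℝ → ENNReal) (a, t) =
      ENNReal.ofReal (v a - u a) := fun a =>
    (lintegral_indicator_one (s := Ico (u a) (v a)) measurableSet_Ico).trans Real.volume_Ico
  have hright : ∀ t, ∫⁻ a, S.indicator (1 : α × ℝ → ENNReal) (a, t) ∂η =
      η {a | u a ≤ t ∧ t < v a} := fun t =>
    lintegral_indicator_one₀ (s := {a | u a ≤ t ∧ t < v a})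
      ((nullMeasurableSet_le hu aemeasurable_const).inter
        (nullMeasurableSet_lt aemeasurable_const hv))
  simp_rw [← hleft, ← hright]
  refine lintegral_lintegral_swap (f := fun a t => S.indicator (1 : α × ℝ → ENNReal) (a, t)) ?_
  exact (aemeasurable_indicator_const_iff (1 : ENNReal)).2 hS

/-- The comonotone coupling minimises the one-sided cost `(y - x)⁺`. -/
theorem lintegral_quantileFn_sub_le {α : Type*} [MeasurableSpace α] (η : Measure α) [SFinite η]
    (μ ν : Measure ℝ) [IsProbabilityMeasure μ] [IsProbabilityMeasure ν]
    {u v : α → ℝ} (hu : Measurable u) (hv : Measurable v) (hμ : η.map u = μ) (hν : η.map v = ν) :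
    ∫⁻ q in Ioo (0 : ℝ) 1, ENNReal.ofReal (quantileFn ν q - quantileFn μ q) ≤
      ∫⁻ a, ENNReal.ofReal (v a - u a) ∂η := by
  rw [lintegral_ofReal_sub_eq _ (aemeasurable_quantileFn μ) (aemeasurable_quantileFn ν),
    lintegral_ofReal_sub_eq η hu.aemeasurable hv.aemeasurable]
  refine lintegral_mono fun t => ?_
  calc (volume.restrict (Ioo (0 : ℝ) 1)) {q | quantileFn μ q ≤ t ∧ t < quantileFn ν q}
      ≤ volume (Ioc (cdfFn ν t) (cdfFn μ t)) := by
        rw [Measure.restrict_apply' measurableSet_Ioo]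
        refine measure_mono fun q hq => ⟨?_, (quantileFn_le_iff μ hq.2 t).1 hq.1.1⟩
        exact lt_of_not_ge fun h => hq.1.2.not_ge ((quantileFn_le_iff ν hq.2 t).2 h)
    _ = μ (Iic t) - ν (Iic t) := by
        rw [Real.volume_Ioc, cdfFn, cdfFn, ENNReal.ofReal_sub _ ENNReal.toReal_nonneg]
        simp only [ENNReal.ofReal_toReal (measure_ne_top _ _)]
    _ ≤ η {a | u a ≤ t ∧ t < v a} := by
        rw [tsub_le_iff_right, ← hμ, ← hν, Measure.map_apply hu measurableSet_Iic,
          Measure.map_apply hv measurableSet_Iic]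
        refine (measure_mono fun a ha => ?_).trans (measure_union_le _ _)
        rcases le_or_gt (v a) t with h | h
        · exact Or.inr h
        · exact Or.inl ⟨ha, h⟩

theorem ofReal_abs_sub_eq (x y : ℝ) :
    ENNReal.ofReal |x - y| = ENNReal.ofReal (y - x) + ENNReal.ofReal (x - y) := by
  rcases le_total x y with h | h
  · rw [abs_of_nonpos (by linarith), ENNReal.ofReal_of_nonpos (p := x - y) (by linarith), add_zero,
      neg_sub]
  · rw [abs_of_nonneg (by linarith), ENNReal.ofReal_of_nonpos (p := y - x) (by linarith), zero_add]

theorem fsd_violation_sum_eq_wasserstein_one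
    (μ ν : Measure ℝ) [IsProbabilityMeasure μ] [IsProbabilityMeasure ν] :
    (∫⁻ q in Ioo (0:ℝ) 1,
        ENNReal.ofReal (max (quantileFn ν q - quantileFn μ q) 0)) +
      (∫⁻ q in Ioo (0:ℝ) 1,
        ENNReal.ofReal (max (quantileFn μ q - quantileFn ν q) 0)) =
      ⨅ γ : { γ : Measure (ℝ × ℝ) // IsProbabilityMeasure γ ∧
          γ.map Prod.fst = μ ∧ γ.map Prod.snd = ν },
        ∫⁻ p, ENNReal.ofReal |p.1 - p.2| ∂γ.1 := by
  have hmax : ∀ x : ℝ, ENNReal.ofReal (max x 0) = ENNReal.ofReal x := fun x => by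
    rw [ENNReal.ofReal_max, ENNReal.ofReal_zero, max_eq_left zero_le]
  have hμm := aemeasurable_quantileFn μ
  have hνm := aemeasurable_quantileFn ν
  simp_rw [hmax]
  apply le_antisymm
  · refine le_iInf fun ⟨γ, hγ, hfst, hsnd⟩ => ?_
    simp_rw [ofReal_abs_sub_eq]
    rw [lintegral_add_left (by fun_prop)]
    exact add_le_add (lintegral_quantileFn_sub_le γ μ ν measurable_fst measurable_snd hfst hsnd)
      (lintegral_quantileFn_sub_le γ ν μ measurable_snd measurable_fst hsnd hfst)
  · have hpair : AEMeasurable (fun q => (quantileFn μ q, quantileFn ν q))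
        (volume.restrict (Ioo (0 : ℝ) 1)) := hμm.prodMk hνm
    have hprob : IsProbabilityMeasure (volume.restrict (Ioo (0 : ℝ) 1)) := ⟨by simp⟩
    have hfst : ((volume.restrict (Ioo (0 : ℝ) 1)).map
        (fun q => (quantileFn μ q, quantileFn ν q))).map Prod.fst = μ := by
      rw [AEMeasurable.map_map_of_aemeasurable measurable_fst.aemeasurable hpair]
      exact map_quantileFn μ
    have hsnd : ((volume.restrict (Ioo (0 : ℝ) 1)).map
        (fun q => (quantileFn μ q, quantileFn ν q))).map Prod.snd = ν := by
      rw [AEMeasurable.map_map_of_aemeasurable measurable_snd.aemeasurable hpair]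
      exact map_quantileFn ν
    refine (iInf_le _ ⟨_, Measure.isProbabilityMeasure_map hpair, hfst, hsnd⟩).trans ?_
    dsimp only
    rw [lintegral_map' (by fun_prop) hpair]
    simp_rw [ofReal_abs_sub_eq]
    rw [lintegral_add_left' (by fun_prop)]
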